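/- arXiv:2311.05116 — 2 statements merged into one kernel-verified Lean document; each statement's English description precedes it below -/
import Mathlib

section
/- For every t > 0 and every ε with 0 < ε < t, there exist a natural number Δ with Δ ≤ (6/π²)·(log(4t/ε))² and real polynomials P, Q in one variable with deg P ≤ 1 + Δ and deg Q ≤ Δ, such that Q(x) ≠ 0 for every x ∈ [−t, t], and for every x ∈ [−t, t] one has |P(x)/Q(x) − max(x, 0)| ≤ ε and |P(x)/Q(x)| ≤ t. -/
open Polynomial in
lemma relu_assemble (t ε : ℝ) (ht : 0 < t) (m : ℕ) (a : ℕ → ℝ) (ha : ∀ k, 0 < a k)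
    (H : ∀ y, 0 ≤ y → y ≤ t → y * (∏ k ∈ Finset.range m, (a k - y)) ^ 2 ≤
      ε * ((∏ k ∈ Finset.range m, (a k + y)) ^ 2 + (∏ k ∈ Finset.range m, (a k - y)) ^ 2)) :
    ∃ P Q : Polynomial ℝ, P.natDegree ≤ 1 + 2 * m ∧ Q.natDegree ≤ 2 * m ∧
        ∀ x ∈ Set.Icc (-t) t, Q.eval x ≠ 0 ∧
          |P.eval x / Q.eval x - max x 0| ≤ ε ∧ |P.eval x / Q.eval x| ≤ t := by
  set p : Polynomial ℝ := ∏ k ∈ Finset.range m, (C (a k) + X) with hp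
  set q : Polynomial ℝ := ∏ k ∈ Finset.range m, (C (a k) - X) with hq
  have dp : p.natDegree ≤ m := by
    refine (natDegree_prod_le _ _).trans ?_
    refine (Finset.sum_le_card_nsmul _ _ 1 fun k _ => ?_).trans (by simp)
    compute_degree
  have dq : q.natDegree ≤ m := by
    refine (natDegree_prod_le _ _).trans ?_
    refine (Finset.sum_le_card_nsmul _ _ 1 fun k _ => ?_).trans (by simp)
    compute_degree
  have dp2 : (p ^ 2).natDegree ≤ 2 * m := natDegree_pow_le.trans (by omega)
  have dq2 : (q ^ 2).natDegree ≤ 2 * m := natDegree_pow_le.trans (by omega)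
  refine ⟨X * p ^ 2, p ^ 2 + q ^ 2, ?_, ?_, ?_⟩
  · refine natDegree_mul_le.trans ?_
    rw [natDegree_X]; omega
  · exact (natDegree_add_le _ _).trans (max_le dp2 dq2)
  rintro x ⟨hx1, hx2⟩
  have ep : ∀ z, p.eval z = ∏ k ∈ Finset.range m, (a k + z) := by
    intro z; simp [hp, eval_prod]
  have eq' : ∀ z, q.eval z = ∏ k ∈ Finset.range m, (a k - z) := by
    intro z; simp [hq, eval_prod]
  have hpp : ∀ z, 0 ≤ z → 0 < p.eval z := by
    intro z hz; rw [ep]; exact Finset.prod_pos fun k _ => by linarith [ha k]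
  have hpm : ∀ z, p.eval (-z) = q.eval z := by
    intro z; rw [ep, eq']; rfl
  have hqm : ∀ z, q.eval (-z) = p.eval z := by
    intro z; rw [ep, eq']; simp
  simp only [eval_mul, eval_add, eval_pow, eval_X]
  simp only [← ep, ← eq'] at H
  have habs : ∀ A B : ℝ, 0 < A ^ 2 + B ^ 2 → |x * A ^ 2 / (A ^ 2 + B ^ 2)| ≤ t := by
    intro A B hAB
    rw [abs_div, abs_mul, abs_of_pos hAB, div_le_iff₀ hAB, abs_of_nonneg (sq_nonneg A)]
    have : |x| ≤ t := abs_le.2 ⟨hx1, hx2⟩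
    nlinarith [sq_nonneg A, sq_nonneg B, abs_nonneg x]
  rcases le_total 0 x with h0 | h0
  · have hpos : 0 < p.eval x ^ 2 + q.eval x ^ 2 := by
      have := hpp x h0; positivity
    refine ⟨hpos.ne', ?_, habs _ _ hpos⟩
    rw [max_eq_left h0]
    have : x * p.eval x ^ 2 / (p.eval x ^ 2 + q.eval x ^ 2) - x
        = - (x * q.eval x ^ 2 / (p.eval x ^ 2 + q.eval x ^ 2)) := by
      field_simp; ring
    rw [this, abs_neg, abs_of_nonneg (by positivity), div_le_iff₀ hpos]
    exact H x h0 hx2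
  · obtain ⟨y, rfl⟩ : ∃ y, x = -y := ⟨-x, by simp⟩
    have hy : 0 ≤ y := by linarith
    rw [hpm, hqm] at *
    have hpos : 0 < q.eval y ^ 2 + p.eval y ^ 2 := by
      have := hpp y hy; positivity
    refine ⟨hpos.ne', ?_, habs _ _ hpos⟩
    rw [max_eq_right h0, sub_zero, neg_mul, neg_div, abs_neg, abs_of_nonneg (by positivity),
      div_le_iff₀ hpos, add_comm]
    exact H y hy (by linarith)

lemma relu_elem (y : ℝ) (h0 : 0 ≤ y) (h1 : y ≤ 1) :
    (1 - y) ^ 2 ≤ (1 + y) ^ 2 * Real.exp (-4 * y) := by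
  rcases eq_or_lt_of_le h1 with rfl | h1
  · simp; positivity
  have hs := Real.hasSum_log_sub_log_of_abs_lt_one (x := y) (by rw [abs_of_nonneg h0]; exact h1)
  have h2 := sum_le_hasSum (Finset.range 1) (fun k _ => by positivity) hs
  simp at h2
  have h3 : 1 - y ≤ (1 + y) * Real.exp (-2 * y) := by
    rw [← Real.log_le_log_iff (by linarith) (by positivity),
      Real.log_mul (by linarith) (by positivity), Real.log_exp]
    linarith
  calc (1 - y) ^ 2 ≤ ((1 + y) * Real.exp (-2 * y)) ^ 2 := by
        gcongr
    _ = _ := by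
        rw [mul_pow, ← Real.exp_nat_mul]; congr 2; push_cast; ring

lemma relu_factor (t v c : ℝ) :
    (t * Real.exp (-c) - t * Real.exp (-v)) ^ 2 ≤
      (t * Real.exp (-c) + t * Real.exp (-v)) ^ 2 * Real.exp (-4 * Real.exp (-|v - c|)) := by
  rcases le_total v c with h | h
  · have := relu_elem (Real.exp (-|v - c|)) (by positivity) (by simp)
    have e : Real.exp (-c) = Real.exp (-v) * Real.exp (-|v - c|) := by
      rw [← Real.exp_add, abs_of_nonpos (by linarith)]; congr 1; ring
    rw [e]
    have h2 := mul_le_mul_of_nonneg_left this (sq_nonneg (t * Real.exp (-v)))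
    linarith
  · have := relu_elem (Real.exp (-|v - c|)) (by positivity) (by simp)
    have e : Real.exp (-v) = Real.exp (-c) * Real.exp (-|v - c|) := by
      rw [← Real.exp_add, abs_of_nonneg (by linarith)]; congr 1; ring
    rw [e]
    have h2 := mul_le_mul_of_nonneg_left this (sq_nonneg (t * Real.exp (-c)))
    linarith

noncomputable def reluPhi (v u : ℝ) : ℝ :=
  if u ≤ v then Real.exp (u - v) else 2 - Real.exp (v - u)

lemma relu_cell (v a b c h : ℝ) (hh : 0 < h) (hb : b = a + h) (hc : c = a + h / 2) :
    reluPhi v b - reluPhi v a ≤ h * Real.exp (h / 2) * Real.exp (-|v - c|) := by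
  have key : 1 - Real.exp (-h) ≤ h := by linarith [Real.add_one_le_exp (-h)]
  unfold reluPhi
  rw [mul_assoc, ← Real.exp_add]
  split_ifs with h1 h2 h2
  · have e : h / 2 + -|v - c| = b - v := by
      rw [abs_of_nonneg (by linarith)]; linarith
    have e2 : Real.exp (a - v) = Real.exp (b - v) * Real.exp (-h) := by
      rw [← Real.exp_add]; congr 1; linarith
    rw [e, e2]
    nlinarith [Real.exp_pos (b - v)]
  · linarith
  · have e : 0 ≤ h / 2 + -|v - c| := by
      have : |v - c| ≤ h / 2 := abs_le.2 ⟨by linarith, by linarith⟩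
      linarith
    have := Real.one_le_exp e
    have := Real.add_one_le_exp (v - b)
    have := Real.add_one_le_exp (a - v)
    nlinarith
  · have e : h / 2 + -|v - c| = v - a := by
      rw [abs_of_nonpos (by linarith)]; linarith
    have e2 : Real.exp (v - b) = Real.exp (v - a) * Real.exp (-h) := by
      rw [← Real.exp_add]; congr 1; linarith
    rw [e, e2]
    nlinarith [Real.exp_pos (v - a)]

lemma relu_sum (v h V : ℝ) (m : ℕ) (hh : 0 < h) (hV : V = m * h) (hv : 0 ≤ v) (hvV : v ≤ V) :
    1 - Real.exp (-V) ≤ h * Real.exp (h / 2) *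
      ∑ k ∈ Finset.range m, Real.exp (-|v - (k * h + h / 2)|) := by
  have h1 : ∑ k ∈ Finset.range m, (reluPhi v ((k + 1 : ℕ) * h) - reluPhi v (k * h)) ≤
      h * Real.exp (h / 2) * ∑ k ∈ Finset.range m, Real.exp (-|v - (k * h + h / 2)|) := by
    rw [Finset.mul_sum]
    refine Finset.sum_le_sum fun k _ => ?_
    exact relu_cell v _ _ _ h hh (by push_cast; ring) rfl
  rw [Finset.sum_range_sub (fun k : ℕ => reluPhi v (k * h)), ← hV] at h1
  refine le_trans ?_ h1
  have e0 : reluPhi v ((0 : ℕ) * h) = Real.exp (-v) := by simp [reluPhi, hv]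
  have e1 : reluPhi v V = 2 - Real.exp (v - V) := by
    unfold reluPhi
    split_ifs with h
    · have : V = v := le_antisymm h hvV
      simp [this]; norm_num
    · rfl
  rw [e0, e1]
  have : Real.exp (-V) = Real.exp (-v) * Real.exp (v - V) := by
    rw [← Real.exp_add]; congr 1; ring
  have a1 : Real.exp (-v) ≤ 1 := by simpa using hv
  have a2 : Real.exp (v - V) ≤ 1 := by simpa using hvV
  nlinarith

lemma relu_numeric (V : ℝ) (m : ℕ) (hV : 0 < V)
    (hm : 3 / Real.pi ^ 2 * (V + 3 * Real.log 2) ^ 2 < m + 1) (hm0 : 0 < m) (S : ℝ)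
    (hS : 1 - Real.exp (-V) ≤ (V / m) * Real.exp ((V / m) / 2) * S) :
    V + Real.log 2 ≤ 4 * S := by
  have hm' : (0 : ℝ) < m := by exact_mod_cast hm0
  have l1 := Real.log_two_gt_d9
  have l2 := Real.log_two_lt_d9
  have hpi : Real.pi ^ 2 ≤ 10 := by
    have := Real.pi_lt_d2; have := Real.pi_pos; nlinarith
  have h3 : (0.3 : ℝ) ≤ 3 / Real.pi ^ 2 := by
    rw [le_div_iff₀ (by positivity)]; linarith
  have h4 : 0.3 * (V + 3 * Real.log 2) ^ 2 < m + 1 :=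
    lt_of_le_of_lt (mul_le_mul_of_nonneg_right h3 (sq_nonneg _)) hm
  have h5 : 0.3 * (V + 2.079) ^ 2 < m + 1 := by
    refine lt_of_le_of_lt ?_ h4
    gcongr; linarith
  have h6 : V / (1 + V) ≤ 1 - Real.exp (-V) := by
    have := Real.add_one_le_exp V
    have : Real.exp (-V) ≤ 1 / (1 + V) := by
      rw [Real.exp_neg, ← one_div]; exact one_div_le_one_div_of_le (by linarith) (by linarith)
    have : V / (1 + V) = 1 - 1 / (1 + V) := by field_simp; ring
    linarith
  have h7 : Real.exp (-((V / m) / 2)) ≥ 1 - (V / m) / 2 := by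
    linarith [Real.add_one_le_exp (-((V / m) / 2))]
  have h8 : V / (1 + V) * Real.exp (-((V / m) / 2)) ≤ V / m * S := by
    calc V / (1 + V) * Real.exp (-((V / m) / 2))
        ≤ ((V / m) * Real.exp ((V / m) / 2) * S) * Real.exp (-((V / m) / 2)) := by
          gcongr; exact h6.trans hS
      _ = V / m * S * (Real.exp ((V / m) / 2) * Real.exp (-((V / m) / 2))) := by ring
      _ = _ := by rw [← Real.exp_add]; simp
  have h9 : V / (1 + V) * (1 - (V / m) / 2) ≤ V / m * S :=
    le_trans (by gcongr) h8
  have h10 : m - V / 2 ≤ (1 + V) * S := by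
    have e1 : V / (1 + V) * (1 - (V / m) / 2) = V / (m * (1 + V)) * (m - V / 2) := by
      field_simp
    have e2 : V / m * S = V / (m * (1 + V)) * ((1 + V) * S) := by field_simp
    rw [e1, e2] at h9
    exact le_of_mul_le_mul_left h9 (by positivity)
  have h11 : (1 + V) * (V + Real.log 2) ≤ (1 + V) * (4 * S) := by nlinarith
  exact le_of_mul_le_mul_left h11 (by linarith)

/-- Rational approximation of ReLU: for `0 < ε < t` there are polynomials `P, Q`
with `deg P ≤ 1 + Δ`, `deg Q ≤ Δ`, `Δ ≤ (6/π²)·log²(4t/ε)`, such that `Q` has no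
zeros on `[−t, t]` and `|P/Q − ReLU| ≤ ε` and `|P/Q| ≤ t` on `[−t, t]`. -/
theorem rational_approx_relu (t ε : ℝ) (ht : 0 < t) (hε : 0 < ε) (hεt : ε < t) :
    ∃ Δ : ℕ, (Δ : ℝ) ≤ 6 / Real.pi ^ 2 * Real.log (4 * t / ε) ^ 2 ∧
      ∃ P Q : Polynomial ℝ, P.natDegree ≤ 1 + Δ ∧ Q.natDegree ≤ Δ ∧
        ∀ x ∈ Set.Icc (-t) t, Q.eval x ≠ 0 ∧
          |P.eval x / Q.eval x - max x 0| ≤ ε ∧ |P.eval x / Q.eval x| ≤ t := by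
  have hL : Real.log (4 * t / ε) = Real.log (t / (2 * ε)) + 3 * Real.log 2 := by
    have : 4 * t / ε = t / (2 * ε) * 2 ^ 3 := by field_simp; norm_num
    rw [this, Real.log_mul (by positivity) (by positivity), Real.log_pow]; norm_num
  set V := Real.log (t / (2 * ε)) with hVdef
  rcases le_or_gt V 0 with hV | hV
  · refine ⟨2 * 0, by simp; positivity, ?_⟩
    refine relu_assemble t ε ht 0 (fun _ => 1) (by simp) ?_
    intro y hy hyt
    have : t / (2 * ε) ≤ 1 := by
      rwa [hVdef, Real.log_nonpos_iff (by positivity)] at hV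
    rw [div_le_one (by positivity)] at this
    simp; linarith
  set m := ⌊3 / Real.pi ^ 2 * (V + 3 * Real.log 2) ^ 2⌋₊ with hmdef
  have hm1 : (m : ℝ) ≤ 3 / Real.pi ^ 2 * (V + 3 * Real.log 2) ^ 2 :=
    Nat.floor_le (by positivity)
  have hm2 : 3 / Real.pi ^ 2 * (V + 3 * Real.log 2) ^ 2 < m + 1 := Nat.lt_floor_add_one _
  have hm0 : 0 < m := by
    rw [hmdef, Nat.floor_pos]
    have l1 := Real.log_two_gt_d9
    have hpi : Real.pi ^ 2 ≤ 10 := by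
      have := Real.pi_lt_d2; have := Real.pi_pos; nlinarith
    have h3 : (0.3 : ℝ) ≤ 3 / Real.pi ^ 2 := by
      rw [le_div_iff₀ (by positivity)]; linarith
    have h4 : (2 : ℝ) ^ 2 ≤ (V + 3 * Real.log 2) ^ 2 := by gcongr; linarith
    nlinarith
  have hm' : (0 : ℝ) < m := by exact_mod_cast hm0
  refine ⟨2 * m, ?_, ?_⟩
  · rw [hL]; push_cast
    calc (2 : ℝ) * m ≤ 2 * (3 / Real.pi ^ 2 * (V + 3 * Real.log 2) ^ 2) := by linarith
      _ = _ := by ring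
  set h := V / m with hh
  have hhpos : 0 < h := by positivity
  refine relu_assemble t ε ht m (fun k => t * Real.exp (-(k * h + h / 2)))
    (fun k => by positivity) ?_
  intro y hy hyt
  have hfac : ∀ k ∈ Finset.range m, 0 ≤ t * Real.exp (-(k * h + h / 2)) := fun k _ => by positivity
  set p := ∏ k ∈ Finset.range m, (t * Real.exp (-(k * h + h / 2)) + y) with hp
  set q := ∏ k ∈ Finset.range m, (t * Real.exp (-(k * h + h / 2)) - y) with hq
  rcases le_or_gt y (2 * ε) with hy2 | hy2
  · have hqp : q ^ 2 ≤ p ^ 2 := by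
      rw [hp, hq, ← Finset.prod_pow, ← Finset.prod_pow]
      refine Finset.prod_le_prod (fun k _ => sq_nonneg _) fun k hk => ?_
      have := mul_nonneg (hfac k hk) hy
      nlinarith
    nlinarith [sq_nonneg q]
  have hy0 : 0 < y := by linarith
  obtain ⟨v, hv⟩ : ∃ v, v = Real.log (t / y) := ⟨_, rfl⟩
  have hyv : y = t * Real.exp (-v) := by
    rw [hv, Real.exp_neg, Real.exp_log (by positivity)]; field_simp
  have hv0 : 0 ≤ v := by
    rw [hv]; exact Real.log_nonneg (by rwa [le_div_iff₀ hy0, one_mul])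
  have hvV : v ≤ V := by
    rw [hv, hVdef]
    exact Real.log_le_log (by positivity) (by gcongr)
  have hsum := relu_sum v h V m hhpos (by rw [hh]; field_simp) hv0 hvV
  have hnum := relu_numeric V m hV hm2 hm0 _ hsum
  set S := ∑ k ∈ Finset.range m, Real.exp (-|v - (k * h + h / 2)|) with hS
  have hqp : q ^ 2 ≤ p ^ 2 * Real.exp (-4 * S) := by
    rw [hp, hq, hS, ← Finset.prod_pow, ← Finset.prod_pow, Finset.mul_sum, Real.exp_sum,
      ← Finset.prod_mul_distrib]
    refine Finset.prod_le_prod (fun k _ => sq_nonneg _) fun k hk => ?_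
    rw [hyv]
    exact relu_factor t v _
  have hexp : Real.exp (-4 * S) ≤ ε / t := by
    rw [← Real.le_log_iff_exp_le (by positivity)]
    have : Real.log (ε / t) = -(V + Real.log 2) := by
      rw [hVdef, ← Real.log_mul (by positivity) (by positivity), ← Real.log_inv]
      congr 1; field_simp
    linarith
  calc y * q ^ 2 ≤ t * (p ^ 2 * (ε / t)) := by
        gcongr
        exact hqp.trans (by gcongr)
    _ = ε * p ^ 2 := by field_simp
    _ ≤ _ := by nlinarith [sq_nonneg q]
end

section
/- There exists an absolute constant C > 0 with the following property. Let L ≥ 1 and let d₀, d₁, …, d_L be integers with each d_i ≥ 2, and let ω₁, …, ω_L be reals with each ω_i ≥ 2. Let F be the class of ReLU networks f : ℝ^{d₀} → ℝ^{d_L} of the form f(x) = σ(A_L·σ(⋯σ(A_1·x + b_1)⋯) + b_L), where σ is the entrywise ReLU u ↦ max(u, 0), A_i ∈ ℝ^{d_i×d_{i−1}}, b_i ∈ ℝ^{d_i}, and for each i every row of the augmented matrix (A_i | b_i) has ℓ¹ norm at most ω_i. Let Y be any set, H > 0, and let ℓ : ℝ^{d_L} × Y → [0, H] be Lipschitz in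 its first argument with respect to the Euclidean norm, with Lipschitz constant ‖ℓ‖_lip > 0. Set N = Σ_{i=1}^L d_i·(d_{i−1} + 1), α = min{H, ‖ℓ‖_lip·√(d_L)·∏_{i=1}^L ω_i}, and β = α^{−1}·‖ℓ‖_lip·√(d_L)·∏_{i=1}^L ω_i. Then for every n ≥ 1 and every sample (x₁, y₁), …, (x_n, y_n) ∈ ℝ^{d₀} × Y with ‖x_i‖_∞ ≤ 1 for all i, the empirical Rademacher complexity R_S(F; ℓ) = 2^{−n}·Σ_{σ ∈ {−1,1}^n} sup_{f ∈ F} (1/n)·Σ_{i=1}^n σ_i·ℓ(f(x_i), y_i) satisfies R_S(F; ℓ) ≤ C·α·√(N/n)·( log β + log n + Σ_{i=1}^L log d_i + L·log₊ log₊(β·√(n/d_L)) )^{1/2}, where log₊(x) = max{0, log x}. -/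
/-- `logPlus x = max(0, log x)`. -/
noncomputable def logPlus (x : ℝ) : ℝ := max 0 (Real.log x)

/-- Evaluation of the first `k` layers of a fully connected ReLU network with
layer widths `dm 0, dm 1, …`, weight matrices `A i` and biases `b i`: each layer
applies the entrywise ReLU `u ↦ max(u, 0)` after the affine map. -/
def reluNet (dm : ℕ → ℕ) (A : ∀ i : ℕ, Matrix (Fin (dm (i + 1))) (Fin (dm i)) ℝ)
    (b : ∀ i : ℕ, Fin (dm (i + 1)) → ℝ) :
    (k : ℕ) → (Fin (dm 0) → ℝ) → Fin (dm k) → ℝ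
  | 0, x => x
  | k + 1, x => fun j => max ((A k).mulVec (reluNet dm A b k x) j + b k j) 0

open Finset in
theorem aux_geom (r : ℝ) (h0 : 0 ≤ r) (h1 : r < 1) (K : ℕ) :
    ∑ k ∈ Finset.Icc (-(K:ℤ)) K, r ^ k.natAbs ≤ 2 / (1 - r) := by
  have hsub : Finset.Icc (-(K:ℤ)) K ⊆
      (range (K+1)).image (fun m : ℕ => (m:ℤ)) ∪ (range (K+1)).image (fun m : ℕ => -(m:ℤ)) := by
    intro k hk
    simp only [Finset.mem_Icc] at hk
    simp only [Finset.mem_union, Finset.mem_image, Finset.mem_range]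
    rcases le_total 0 k with h | h
    · left; exact ⟨k.natAbs, by omega, by omega⟩
    · right; exact ⟨k.natAbs, by omega, by omega⟩
  have hg : ∑ m ∈ range (K+1), r ^ m ≤ 1 / (1 - r) := by
    rw [le_div_iff₀ (by linarith), geom_sum_mul_neg]
    have := pow_nonneg h0 (K+1)
    linarith
  calc _ ≤ ∑ k ∈ (range (K+1)).image (fun m : ℕ => (m:ℤ)) ∪ (range (K+1)).image (fun m : ℕ => -(m:ℤ)), r ^ k.natAbs :=
        Finset.sum_le_sum_of_subset_of_nonneg hsub (fun _ _ _ => pow_nonneg h0 _)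
    _ ≤ ∑ k ∈ (range (K+1)).image (fun m : ℕ => (m:ℤ)), r ^ k.natAbs
        + ∑ k ∈ (range (K+1)).image (fun m : ℕ => -(m:ℤ)), r ^ k.natAbs := by
        rw [← Finset.sum_union_inter]
        have : 0 ≤ ∑ k ∈ (range (K+1)).image (fun m : ℕ => (m:ℤ)) ∩ (range (K+1)).image (fun m : ℕ => -(m:ℤ)), r ^ k.natAbs :=
          Finset.sum_nonneg (fun _ _ => pow_nonneg h0 _)
        linarith
    _ = ∑ m ∈ range (K+1), r ^ m + ∑ m ∈ range (K+1), r ^ m := by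
        rw [Finset.sum_image (by intro a _ b _ h; simpa using h),
          Finset.sum_image (by intro a _ b _ h; simpa using h)]
        simp
    _ ≤ 2 / (1 - r) := by
        have : 2 / (1 - r) = 1 / (1-r) + 1/(1-r) := by ring
        linarith

theorem aux_count (ι : Type) [Fintype ι] [DecidableEq ι] (q : ℕ) (hq : 1 ≤ q) :
    ∃ G : Finset (ι → ℤ), (G.card : ℝ) ≤ (12 * (q:ℝ)) ^ Fintype.card ι ∧
      ∀ k : ι → ℤ, k ∈ G ↔ ∑ j, (k j).natAbs ≤ Fintype.card ι * q := by
  set m := Fintype.card ι with hm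
  set K := m * q with hK
  set P := Fintype.piFinset (fun _ : ι => Finset.Icc (-(K:ℤ)) K) with hP
  refine ⟨P.filter (fun k => ∑ j, (k j).natAbs ≤ K), ?_, ?_⟩
  · have hq' : (1:ℝ) ≤ q := by exact_mod_cast hq
    set r : ℝ := q / (q+1) with hr
    have hr0 : 0 < r := by positivity
    have hr1 : r < 1 := by rw [hr, div_lt_one (by positivity)]; linarith
    have h1r : 2 / (1 - r) ≤ 4 * q := by
      have : 1 - r = 1 / (q+1) := by rw [hr]; field_simp; ring
      rw [this]; simp; linarith
    have hrq : (1:ℝ) ≤ 3 ^ m * r ^ K := by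
      have h3 : 1 ≤ 3 * r ^ q := by
        have hx : r⁻¹ ^ q ≤ 3 := by
          have h2 : r⁻¹ ≤ Real.exp (1/q) := by
            have := Real.add_one_le_exp (1/(q:ℝ))
            have h4 : r⁻¹ = 1/q + 1 := by rw [hr]; field_simp; ring
            rw [h4]; exact this
          calc r⁻¹ ^ q ≤ (Real.exp (1/q)) ^ q := pow_le_pow_left₀ (by positivity) h2 q
            _ = Real.exp 1 := by rw [← Real.exp_nat_mul]; congr 1; field_simp
            _ ≤ 3 := by have := Real.exp_one_lt_d9; linarith
        rw [inv_pow] at hx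
        have := pow_pos hr0 q
        rw [inv_le_iff_one_le_mul₀ this] at hx
        exact hx
      rw [hK, mul_comm m q, pow_mul, ← mul_pow]
      exact one_le_pow₀ h3
    calc ((P.filter (fun k => ∑ j, (k j).natAbs ≤ K)).card : ℝ)
        = ∑ k ∈ P.filter (fun k => ∑ j, (k j).natAbs ≤ K), (1:ℝ) := by simp
      _ ≤ ∑ k ∈ P.filter (fun k => ∑ j, (k j).natAbs ≤ K), 3 ^ m * ∏ j, r ^ (k j).natAbs := by
          apply Finset.sum_le_sum
          intro k hk
          rw [Finset.mem_filter] at hk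
          refine hrq.trans ?_
          rw [Finset.prod_pow_eq_pow_sum]
          apply mul_le_mul_of_nonneg_left _ (by positivity)
          exact pow_le_pow_of_le_one hr0.le hr1.le hk.2
      _ ≤ ∑ k ∈ P, 3 ^ m * ∏ j, r ^ (k j).natAbs :=
          Finset.sum_le_sum_of_subset_of_nonneg (Finset.filter_subset _ _)
            (fun _ _ _ => by positivity)
      _ = 3 ^ m * ∏ j : ι, ∑ k ∈ Finset.Icc (-(K:ℤ)) K, r ^ k.natAbs := by
          rw [← Finset.mul_sum, Finset.prod_univ_sum]
      _ ≤ 3 ^ m * (4 * q) ^ m := by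
          apply mul_le_mul_of_nonneg_left _ (by positivity)
          rw [Finset.prod_const, Finset.card_univ]
          exact pow_le_pow_left₀ (Finset.sum_nonneg fun _ _ => by positivity)
            ((aux_geom r hr0.le hr1 K).trans h1r) _
      _ = (12 * (q:ℝ)) ^ m := by rw [← mul_pow]; ring
  · intro k
    simp only [Finset.mem_filter, hP, Fintype.mem_piFinset, Finset.mem_Icc, and_iff_right_iff_imp]
    intro h j
    have := Finset.single_le_sum (f := fun j => (k j).natAbs) (fun _ _ => Nat.zero_le _) (Finset.mem_univ j)
    omega

theorem aux_round (v : ℝ) : ∃ k : ℤ, ((k.natAbs : ℕ) : ℝ) ≤ |v| ∧ |v - k| ≤ 1 := by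
  rcases le_total 0 v with h | h
  · refine ⟨⌊v⌋, ?_, ?_⟩
    · rw [Nat.cast_natAbs, Int.cast_abs, abs_of_nonneg h, abs_of_nonneg (by exact_mod_cast Int.floor_nonneg.2 h)]
      exact Int.floor_le v
    · have := Int.floor_le v
      have := Int.lt_floor_add_one v
      rw [abs_le]; constructor <;> linarith
  · refine ⟨⌈v⌉, ?_, ?_⟩
    · have h2 : ⌈v⌉ ≤ 0 := Int.ceil_le.2 (by simpa using h)
      rw [Nat.cast_natAbs, Int.cast_abs, abs_of_nonpos h, abs_of_nonpos (by exact_mod_cast h2)]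
      linarith [Int.le_ceil v]
    · have := Int.le_ceil v
      have := Int.ceil_lt_add_one v
      rw [abs_le]; constructor <;> linarith

theorem aux_row (ι : Type) [Fintype ι] [DecidableEq ι] [Nonempty ι] (q : ℕ) (hq : 1 ≤ q)
    (w : ℝ) (hw : 0 < w) :
    ∃ G : Finset (ι → ℝ), (G.card : ℝ) ≤ (12 * (q:ℝ)) ^ Fintype.card ι ∧
      (∀ g ∈ G, ∑ j, |g j| ≤ w) ∧
      ∀ v : ι → ℝ, ∑ j, |v j| ≤ w → ∃ g ∈ G, ∑ j, |v j - g j| ≤ w / q := by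
  obtain ⟨G, hG, hmem⟩ := aux_count ι q hq
  set m := Fintype.card ι with hm
  have hm0 : (0:ℝ) < m := by exact_mod_cast Fintype.card_pos
  have hq0 : (0:ℝ) < q := by exact_mod_cast hq
  set h : ℝ := w / (m * q) with hh
  have hh0 : 0 < h := by positivity
  have hw' : h * (m * q) = w := by rw [hh]; field_simp
  refine ⟨G.image (fun k j => h * (k j : ℝ)), ?_, ?_, ?_⟩
  · exact le_trans (by exact_mod_cast Finset.card_image_le) hG
  · intro g hg
    obtain ⟨k, hk, rfl⟩ := Finset.mem_image.1 hg
    have := (hmem k).1 hk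
    have h2 : ∑ j, ((k j).natAbs : ℝ) ≤ m * q := by exact_mod_cast this
    calc ∑ j, |h * (k j : ℝ)| = h * ∑ j, ((k j).natAbs : ℝ) := by
          rw [Finset.mul_sum]
          refine Finset.sum_congr rfl fun j _ => ?_
          rw [abs_mul, abs_of_pos hh0, Nat.cast_natAbs, Int.cast_abs]
      _ ≤ h * (m * q) := mul_le_mul_of_nonneg_left h2 hh0.le
      _ = w := hw'
  · intro v hv
    choose k hk1 hk2 using fun j => aux_round (v j / h)
    refine ⟨fun j => h * (k j : ℝ), Finset.mem_image.2 ⟨k, (hmem k).2 ?_, rfl⟩, ?_⟩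
    · have : ∑ j, ((k j).natAbs : ℝ) ≤ m * q := by
        calc ∑ j, ((k j).natAbs : ℝ) ≤ ∑ j, |v j / h| := Finset.sum_le_sum fun j _ => hk1 j
          _ = (∑ j, |v j|) / h := by
            rw [Finset.sum_div]
            refine Finset.sum_congr rfl fun j _ => ?_
            rw [abs_div, abs_of_pos hh0]
          _ ≤ m * q := by rw [div_le_iff₀ hh0]; linarith
      exact_mod_cast this
    · calc ∑ j, |v j - h * (k j : ℝ)| ≤ ∑ j : ι, h := by
            refine Finset.sum_le_sum fun j _ => ?_
            have : v j - h * (k j : ℝ) = h * (v j / h - k j) := by field_simp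
            rw [this, abs_mul, abs_of_pos hh0]
            nlinarith [hk2 j]
        _ = w / q := by
            simp only [Finset.sum_const, Finset.card_univ, nsmul_eq_mul]
            rw [← hm, hh]; field_simp

theorem aux_dot {d : ℕ} (a u : Fin d → ℝ) (B : ℝ) (hu : ∀ j, |u j| ≤ B) :
    |∑ j, a j * u j| ≤ (∑ j, |a j|) * B := by
  rw [Finset.sum_mul]
  refine (Finset.abs_sum_le_sum_abs _ _).trans (Finset.sum_le_sum fun j _ => ?_)
  rw [abs_mul]
  exact mul_le_mul_of_nonneg_left (hu j) (abs_nonneg _)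

theorem aux_net (L : ℕ) (dm : ℕ → ℕ) (ω : ℕ → ℝ) (hω : ∀ i < L, 2 ≤ ω i)
    (n : ℕ) (x : Fin n → Fin (dm 0) → ℝ) (hx : ∀ i j, |x i j| ≤ 1) (q : ℕ) (hq : 1 ≤ q) :
    ∀ k ≤ L, 1 ≤ ∏ i ∈ Finset.range k, ω i ∧
      ∃ T : Finset (Fin n → Fin (dm k) → ℝ),
      (T.card : ℝ) ≤ (12 * (q:ℝ)) ^ (∑ i ∈ Finset.range k, dm (i + 1) * (dm i + 1)) ∧
      (∀ t ∈ T, ∀ i j, |t i j| ≤ ∏ i ∈ Finset.range k, ω i) ∧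
      ∀ (A : ∀ i : ℕ, Matrix (Fin (dm (i + 1))) (Fin (dm i)) ℝ)
            (b : ∀ i : ℕ, Fin (dm (i + 1)) → ℝ),
            (∀ i < k, ∀ rI : Fin (dm (i + 1)),
              (∑ j, |A i rI j|) + |b i rI| ≤ ω i) →
        ∃ t ∈ T, ∀ i j, |reluNet dm A b k (x i) j - t i j| ≤
          k / q * ∏ i ∈ Finset.range k, ω i := by
  intro k
  induction k with
  | zero =>
    intro _
    refine ⟨by simp, {x}, by simp, by simpa using hx, ?_⟩
    intro A b _
    exact ⟨x, by simp, by simp [reluNet]⟩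
  | succ k ih =>
    intro hk
    obtain ⟨hB, T, hT1, hT2, hT3⟩ := ih (by omega)
    have hw := hω k (by omega)
    rw [Finset.prod_range_succ]
    set B := ∏ i ∈ Finset.range k, ω i with hBdef
    obtain ⟨G, hG1, hG2, hG3⟩ := aux_row (Option (Fin (dm k))) q hq (ω k) (by linarith)
    have hq0 : (0:ℝ) < q := by exact_mod_cast hq
    refine ⟨by nlinarith, (T ×ˢ Fintype.piFinset (fun _ : Fin (dm (k+1)) => G)).image
      (fun p i r => max (∑ j, p.2 r (some j) * p.1 i j + p.2 r none) 0), ?_, ?_, ?_⟩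
    · refine le_trans (Nat.cast_le.2 Finset.card_image_le) ?_
      rw [Finset.card_product, Fintype.card_piFinset_const, Finset.sum_range_succ, pow_add]
      push_cast
      refine mul_le_mul hT1 ?_ (by positivity) (by positivity)
      rw [mul_comm (dm (k+1)), pow_mul]
      refine pow_le_pow_left₀ (by positivity) ?_ _
      simpa using hG1
    · intro t ht i r
      obtain ⟨⟨t, W⟩, hp, rfl⟩ := Finset.mem_image.1 ht
      rw [Finset.mem_product, Fintype.mem_piFinset] at hp
      obtain ⟨ht, hW⟩ := hp
      have h1 := hG2 _ (hW r)
      rw [Fintype.sum_option] at h1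
      have h2 := aux_dot (fun j => W r (some j)) (t i) B (hT2 t ht i)
      have h3 := abs_add_le (∑ j, W r (some j) * t i j) (W r none)
      have h4 : |W r none| ≤ |W r none| * B := le_mul_of_one_le_right (abs_nonneg _) hB
      have h6 : |∑ j, W r (some j) * t i j + W r none| ≤ B * ω k := by
        simp only at h1 h2
        nlinarith
      have h5 := abs_max_sub_max_le_abs (∑ j, W r (some j) * t i j + W r none) 0 0
      simp only [max_self, sub_zero] at h5
      exact h5.trans h6
    · intro A b hAb
      obtain ⟨t, ht, hte⟩ := hT3 A b (fun i hi => hAb i (by omega))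
      have hrow := hAb k (by omega)
      have : ∀ r : Fin (dm (k+1)), ∃ g ∈ G, ∑ j : Option (Fin (dm k)),
          |(j.elim (b k r) (A k r)) - g j| ≤ ω k / q := by
        intro r
        apply hG3
        rw [Fintype.sum_option]
        simpa [add_comm] using hrow r
      choose W hW hWe using this
      refine ⟨_, Finset.mem_image.2 ⟨(t, W), Finset.mem_product.2 ⟨ht, Fintype.mem_piFinset.2 hW⟩, rfl⟩, ?_⟩
      intro i r
      simp only [reluNet]
      refine (abs_max_sub_max_le_abs _ _ _).trans ?_
      have h1 := hWe r
      rw [Fintype.sum_option] at h1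
      simp only [Option.elim] at h1
      set u := reluNet dm A b k (x i) with hu
      have h2 := aux_dot (A k r) (fun j => u j - t i j) _ (hte i)
      have h3 := aux_dot (fun j => A k r j - W r (some j)) (t i) B (hT2 t ht i)
      have h4 : |b k r - W r none| ≤ |b k r - W r none| * B := le_mul_of_one_le_right (abs_nonneg _) hB
      have hdec : (A k).mulVec u r + b k r - (∑ j, W r (some j) * t i j + W r none)
          = ∑ j, A k r j * (u j - t i j) + ∑ j, (A k r j - W r (some j)) * t i j
            + (b k r - W r none) := by
        simp only [Matrix.mulVec, dotProduct, mul_sub, sub_mul, Finset.sum_sub_distrib]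
        ring
      rw [hdec]
      refine (abs_add_le _ _).trans ?_
      have h5 := abs_add_le (∑ j, A k r j * (u j - t i j)) (∑ j, (A k r j - W r (some j)) * t i j)
      have h6 : ∑ j, |A k r j| ≤ ω k := by have := hrow r; have := abs_nonneg (b k r); linarith
      have h7 : (∑ j, |A k r j|) * (k / q * B) ≤ ω k * (k / q * B) :=
        mul_le_mul_of_nonneg_right h6 (by positivity)
      have h8 := mul_le_mul_of_nonneg_right h1 (show 0 ≤ B by linarith)
      have h9 : ((k+1 : ℕ) : ℝ) / q * (B * ω k) = ω k * (k / q * B) + ω k / q * B := by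
        push_cast; ring
      rw [h9]
      nlinarith

def sgn (b : Bool) : ℝ := if b then 1 else -1

theorem aux_mgf (n : ℕ) (lam a : ℝ) (g : Fin n → ℝ) (hg : ∀ i, |g i| ≤ a) :
    (2 ^ n : ℝ)⁻¹ * ∑ s : Fin n → Bool, Real.exp (lam * ∑ i, sgn (s i) * g i)
      ≤ Real.exp (lam ^ 2 * a ^ 2 * n / 2) := by
  have h1 : ∑ s : Fin n → Bool, Real.exp (lam * ∑ i, sgn (s i) * g i)
      = ∏ i, ∑ c : Bool, Real.exp (lam * (sgn c * g i)) := by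
    rw [Finset.prod_univ_sum, Fintype.piFinset_univ]
    refine Finset.sum_congr rfl fun s _ => ?_
    rw [Finset.mul_sum, Real.exp_sum]
  have h2 : ∀ i, ∑ c : Bool, Real.exp (lam * (sgn c * g i)) = 2 * Real.cosh (lam * g i) := by
    intro i
    simp [sgn, Real.cosh_eq]; ring
  rw [h1]
  simp only [h2]
  rw [Finset.prod_mul_distrib, Finset.prod_const, Finset.card_univ, Fintype.card_fin,
    inv_mul_cancel_left₀ (by positivity)]
  calc ∏ i, Real.cosh (lam * g i) ≤ ∏ i : Fin n, Real.exp (lam ^ 2 * a ^ 2 / 2) := by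
        refine Finset.prod_le_prod (fun i _ => (Real.cosh_pos _).le) fun i _ => ?_
        refine (Real.cosh_le_exp_half_sq _).trans (Real.exp_le_exp.2 ?_)
        have : (g i) ^ 2 ≤ a ^ 2 := by
          rw [← sq_abs (g i)]
          exact pow_le_pow_left₀ (abs_nonneg _) (hg i) 2
        rw [mul_pow]
        nlinarith [sq_nonneg lam]
    _ = _ := by
        rw [Finset.prod_const, Finset.card_univ, Fintype.card_fin, ← Real.exp_nat_mul]
        congr 1; ring

theorem aux_sgn_sum (n : ℕ) (c : Fin n → ℝ) :
    ∑ s : Fin n → Bool, ∑ i, sgn (s i) * c i = 0 := by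
  rw [Finset.sum_comm]
  refine Finset.sum_eq_zero fun i _ => ?_
  have : ∑ s : Fin n → Bool, sgn (s i) * c i = ∑ s : Fin n → Bool, -(sgn (s i) * c i) := by
    refine Fintype.sum_equiv ((Equiv.piCongrRight fun _ => Equiv.boolNot)) _ _ fun s => ?_
    cases h : s i <;> simp [sgn, h]
  rw [Finset.sum_neg_distrib] at this
  linarith

/-- Massart-type bound. -/
theorem aux_massart (n : ℕ) (hn : 1 ≤ n) (c : Fin n → ℝ) (V : Set (Fin n → ℝ)) (hV : V.Nonempty)
    (a e M : ℝ) (ha : 0 < a) (hM : 1 < M) (T : Finset (Fin n → ℝ)) (hT : (T.card : ℝ) ≤ M)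
    (hTa : ∀ t ∈ T, ∀ i, |t i - c i| ≤ a) (hVT : ∀ v ∈ V, ∃ t ∈ T, ∀ i, |v i - t i| ≤ e) :
    (2 ^ n : ℝ)⁻¹ * ∑ s : Fin n → Bool,
      sSup {v : ℝ | ∃ f ∈ V, v = (1 / n) * ∑ i, sgn (s i) * f i} ≤
      e + a * Real.sqrt (2 * Real.log M / n) := by
  have hn0 : (0:ℝ) < n := by exact_mod_cast hn
  have hlM : 0 < Real.log M := Real.log_pos hM
  set S := Real.sqrt (2 * Real.log M / n) with hS
  have hS0 : 0 < S := Real.sqrt_pos.2 (by positivity)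
  have hS2 : S ^ 2 = 2 * Real.log M / n := Real.sq_sqrt (by positivity)
  set lam := S / a with hlam
  have hlam0 : 0 < lam := by positivity
  set Q := M * Real.exp (lam ^ 2 * a ^ 2 * n / 2) with hQ
  have hQ0 : 0 < Q := by positivity
  have hlQ : Real.log Q = 2 * Real.log M := by
    rw [hQ, Real.log_mul (by positivity) (by positivity), Real.log_exp]
    have : lam ^ 2 * a ^ 2 = S ^ 2 := by rw [hlam]; field_simp
    rw [this, hS2]; field_simp; ring
  set Z : (Fin n → Bool) → ℝ := fun s => ∑ t ∈ T, Real.exp (lam * ∑ i, sgn (s i) * (t i - c i)) with hZ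
  have habs : ∀ b, |sgn b| = 1 := by intro b; cases b <;> simp [sgn]
  have key : ∀ s : Fin n → Bool,
      sSup {v : ℝ | ∃ f ∈ V, v = (1 / n) * ∑ i, sgn (s i) * f i} ≤
        (1/n) * ∑ i, sgn (s i) * c i + e + 1 / (n * lam) * (Real.log Q + Z s / Q - 1) := by
    intro s
    refine csSup_le ?_ ?_
    · obtain ⟨f, hf⟩ := hV
      exact ⟨_, f, hf, rfl⟩
    rintro v ⟨f, hf, rfl⟩
    obtain ⟨t, ht, hft⟩ := hVT f hf
    set X := ∑ i, sgn (s i) * (t i - c i) with hX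
    have h1 : ∑ i, sgn (s i) * f i = ∑ i, sgn (s i) * c i + ∑ i, sgn (s i) * (f i - t i) + X := by
      rw [hX, ← Finset.sum_add_distrib, ← Finset.sum_add_distrib]
      refine Finset.sum_congr rfl fun i _ => by ring
    have h2 : ∑ i, sgn (s i) * (f i - t i) ≤ n * e := by
      calc _ ≤ ∑ i : Fin n, e := Finset.sum_le_sum fun i _ => by
            refine (le_abs_self _).trans ?_
            rw [abs_mul, habs, one_mul]; exact hft i
        _ = n * e := by simp
    have h3 : Real.exp (lam * X) ≤ Z s := 
      Finset.single_le_sum (f := fun t : Fin n → ℝ => Real.exp (lam * ∑ i, sgn (s i) * (t i - c i)))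
        (fun _ _ => (Real.exp_pos _).le) ht
    have h4 : lam * X ≤ Real.log Q + Z s / Q - 1 := by
      have h5 := Real.add_one_le_exp (lam * X - Real.log Q)
      rw [Real.exp_sub, Real.exp_log hQ0] at h5
      have h6 : Real.exp (lam * X) / Q ≤ Z s / Q := by gcongr
      linarith
    have h7 : X ≤ 1 / lam * (Real.log Q + Z s / Q - 1) := by
      rw [one_div, ← div_eq_inv_mul, le_div_iff₀ hlam0]; linarith
    rw [h1]
    calc (1 / n) * (∑ i, sgn (s i) * c i + ∑ i, sgn (s i) * (f i - t i) + X)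
        ≤ (1/n) * (∑ i, sgn (s i) * c i + n * e + 1 / lam * (Real.log Q + Z s / Q - 1)) := by
          gcongr
      _ = _ := by field_simp
  have hZm : (2 ^ n : ℝ)⁻¹ * ∑ s, Z s ≤ Q := by
    rw [hZ, Finset.sum_comm, Finset.mul_sum]
    calc _ ≤ ∑ t ∈ T, Real.exp (lam ^ 2 * a ^ 2 * n / 2) := 
          Finset.sum_le_sum fun t ht => aux_mgf n lam a (fun i => t i - c i) (hTa t ht)
      _ = T.card * Real.exp (lam ^ 2 * a ^ 2 * n / 2) := by simp
      _ ≤ Q := by rw [hQ]; gcongr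
  calc _ ≤ (2 ^ n : ℝ)⁻¹ * ∑ s : Fin n → Bool, ((1/n) * ∑ i, sgn (s i) * c i + e + 1 / (n * lam) * (Real.log Q + Z s / Q - 1)) := by
        gcongr with s _
        exact key s
    _ = e + 1 / (n * lam) * (Real.log Q + ((2 ^ n : ℝ)⁻¹ * ∑ s, Z s) / Q - 1) := by
        simp only [Finset.sum_add_distrib, Finset.sum_sub_distrib, ← Finset.mul_sum, ← Finset.sum_div, aux_sgn_sum]
        simp
        field_simp
    _ ≤ e + 1 / (n * lam) * (Real.log Q) := by
        have : ((2 ^ n : ℝ)⁻¹ * ∑ s, Z s) / Q ≤ 1 := by rw [div_le_one hQ0]; exact hZm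
        gcongr
        linarith
    _ = e + a * S := by
        rw [hlQ]
        congr 1
        have : 2 * Real.log M = S ^ 2 * n := by rw [hS2]; field_simp
        rw [this, hlam]; field_simp

set_option maxHeartbeats 2000000 in
/-- Rademacher complexity bound for ReLU networks with `ℓ¹`-bounded rows: there is
an absolute constant `C > 0` such that the empirical Rademacher complexity of the
class (composed with a bounded Lipschitz loss) over a sample of size `n` with
`‖xᵢ‖_∞ ≤ 1` is at most
`C·α·√(N/n)·(log β + log n + Σᵢ log dᵢ + L·log₊log₊(β·√(n/d_L)))^{1/2}`. -/
theorem rademacher_relu_network : ∃ C : ℝ, 0 < C ∧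
    ∀ (L : ℕ), 1 ≤ L → ∀ (dm : ℕ → ℕ), (∀ i ≤ L, 2 ≤ dm i) →
    ∀ (ω : ℕ → ℝ), (∀ i < L, 2 ≤ ω i) →
    ∀ (Y : Type) (H : ℝ), 0 < H →
    ∀ (ℓ : (Fin (dm L) → ℝ) → Y → ℝ) (Kℓ : ℝ), 0 < Kℓ →
      (∀ y u v, |ℓ u y - ℓ v y| ≤ Kℓ * Real.sqrt (∑ j, (u j - v j) ^ 2)) →
      (∀ u y, ℓ u y ∈ Set.Icc (0 : ℝ) H) →
    ∀ (n : ℕ), 1 ≤ n → ∀ (x : Fin n → Fin (dm 0) → ℝ) (y : Fin n → Y),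
      (∀ i j, |x i j| ≤ 1) →
    ∀ (Npar : ℕ),
      Npar = ∑ i ∈ Finset.range L, dm (i + 1) * (dm i + 1) →
    ∀ (α β : ℝ),
      α = min H (Kℓ * Real.sqrt (dm L) * ∏ i ∈ Finset.range L, ω i) →
      β = α⁻¹ * (Kℓ * Real.sqrt (dm L) * ∏ i ∈ Finset.range L, ω i) →
    (2 ^ n : ℝ)⁻¹ * ∑ s : Fin n → Bool,
        sSup {v : ℝ |
          ∃ (A : ∀ i : ℕ, Matrix (Fin (dm (i + 1))) (Fin (dm i)) ℝ)
            (b : ∀ i : ℕ, Fin (dm (i + 1)) → ℝ),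
            (∀ i < L, ∀ rI : Fin (dm (i + 1)),
              (∑ j, |A i rI j|) + |b i rI| ≤ ω i) ∧
            v = (1 / n) * ∑ i : Fin n,
                (if s i then (1 : ℝ) else -1) * ℓ (reluNet dm A b L (x i)) (y i)}
      ≤ C * α * Real.sqrt (Npar / (n : ℝ))
        * Real.sqrt (Real.log β + Real.log n
            + (∑ i ∈ Finset.range L, Real.log (dm (i + 1)))
            + L * logPlus (logPlus (β * Real.sqrt (n / (dm L : ℝ))))) := by
  refine ⟨12, by norm_num, ?_⟩
  intro L hL dm hdm ω hω Y H hH ℓ K hK hlip hrange n hn x y hx N hN α β hα hβ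
  have hn1 : (1:ℝ) ≤ n := by exact_mod_cast hn
  have hL1 : (1:ℝ) ≤ L := by exact_mod_cast hL
  have hprod : 1 ≤ ∏ i ∈ Finset.range L, ω i := (aux_net L dm ω hω n x hx 1 le_rfl L le_rfl).1
  have hdL : (2:ℝ) ≤ dm L := by exact_mod_cast hdm L le_rfl
  set B := ∏ i ∈ Finset.range L, ω i with hB
  set P := K * Real.sqrt (dm L) * B with hP
  have hsq : 0 < Real.sqrt (dm L) := Real.sqrt_pos.2 (by linarith)
  have hP0 : 0 < P := by positivity
  have hα0 : 0 < α := by rw [hα]; exact lt_min hH hP0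
  have hαP : α ≤ P := by rw [hα]; exact min_le_right _ _
  have hαβ : α * β = P := by rw [hβ]; field_simp
  have hβ1 : 1 ≤ β := by
    by_contra hc
    push Not at hc
    nlinarith
  have hlip' : ∀ yy (u v : Fin (dm L) → ℝ) (e : ℝ), 0 ≤ e → (∀ j, |u j - v j| ≤ e) →
      |ℓ u yy - ℓ v yy| ≤ K * Real.sqrt (dm L) * e := by
    intro yy u v e he huv
    refine (hlip yy u v).trans ?_
    rw [mul_assoc]
    refine mul_le_mul_of_nonneg_left ?_ hK.le
    have h1 : ∑ j, (u j - v j) ^ 2 ≤ dm L * e ^ 2 := by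
      calc _ ≤ ∑ j : Fin (dm L), e ^ 2 := Finset.sum_le_sum fun j _ => by
            rw [← sq_abs]; exact pow_le_pow_left₀ (abs_nonneg _) (huv j) 2
        _ = dm L * e ^ 2 := by simp
    calc _ ≤ Real.sqrt (dm L * e ^ 2) := Real.sqrt_le_sqrt h1
      _ = Real.sqrt (dm L) * e := by rw [Real.sqrt_mul (by positivity), Real.sqrt_sq he]
  set q := ⌈(L:ℝ) * β * n⌉₊ with hq
  have hLβn : 1 ≤ (L:ℝ) * β * n := one_le_mul_of_one_le_of_one_le (one_le_mul_of_one_le_of_one_le hL1 hβ1) hn1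
  have hq1 : (L:ℝ) * β * n ≤ q := Nat.le_ceil _
  have hq2 : (q:ℝ) ≤ 2 * (L * β * n) := by
    have := Nat.ceil_lt_add_one (show 0 ≤ (L:ℝ) * β * n by linarith)
    linarith
  have hq3 : (1:ℝ) ≤ q := by linarith
  have hq4 : 1 ≤ q := by exact_mod_cast hq3
  obtain ⟨-, T, hT1, hT2, hT3⟩ := aux_net L dm ω hω n x hx q hq4 L le_rfl
  rw [← hN] at hT1
  rw [← hB] at hT2 hT3
  have hN1 : 1 ≤ N := by
    have h1 := Finset.single_le_sum (f := fun i => dm (i+1) * (dm i + 1)) (fun _ _ => Nat.zero_le _) (Finset.mem_range.2 (show 0 < L by omega))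
    have h2 := hdm 1 (by omega)
    rw [hN]
    refine le_trans ?_ h1
    exact Nat.one_le_iff_ne_zero.2 (by simp; omega)
  have hN1' : (1:ℝ) ≤ N := by exact_mod_cast hN1
  set V : Set (Fin n → ℝ) := {f | ∃ (A : ∀ i : ℕ, Matrix (Fin (dm (i + 1))) (Fin (dm i)) ℝ)
            (b : ∀ i : ℕ, Fin (dm (i + 1)) → ℝ),
            (∀ i < L, ∀ rI : Fin (dm (i + 1)),
              (∑ j, |A i rI j|) + |b i rI| ≤ ω i) ∧ f = fun i => ℓ (reluNet dm A b L (x i)) (y i)} with hV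
  have hmas := aux_massart n hn (fun i => ℓ 0 (y i)) V
    ⟨_, fun _ => 0, fun _ => 0, fun i hi r => by simpa using (by linarith [hω i hi] : 0 ≤ ω i), rfl⟩
    α (α / n) ((12 * (q:ℝ)) ^ N) hα0 (one_lt_pow₀ (by linarith) (by omega))
    (T.image (fun t i => ℓ (t i) (y i))) (le_trans (Nat.cast_le.2 Finset.card_image_le) hT1)
    (by
      intro t ht i
      obtain ⟨t, ht2, rfl⟩ := Finset.mem_image.1 ht
      rw [hα]
      refine le_min ?_ ?_
      · have h1 := hrange (t i) (y i)
        have h2 := hrange 0 (y i)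
        rw [Set.mem_Icc] at h1 h2
        rw [abs_le]; constructor <;> linarith
      · refine hlip' (y i) (t i) 0 B (by linarith) fun j => ?_
        simpa using hT2 t ht2 i j)
    (by
      rintro v ⟨A, b, hAb, rfl⟩
      obtain ⟨t, ht, hte⟩ := hT3 A b hAb
      refine ⟨_, Finset.mem_image.2 ⟨t, ht, rfl⟩, fun i => ?_⟩
      refine (hlip' (y i) _ _ _ (by positivity) (hte i)).trans ?_
      have h1 : K * Real.sqrt (dm L) * (L / q * B) = P * L / q := by rw [hP]; ring
      rw [h1, div_le_div_iff₀ (by linarith) (by linarith), ← hαβ]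
      nlinarith)
  have hset : ∀ s : Fin n → Bool, {v : ℝ |
          ∃ (A : ∀ i : ℕ, Matrix (Fin (dm (i + 1))) (Fin (dm i)) ℝ)
            (b : ∀ i : ℕ, Fin (dm (i + 1)) → ℝ),
            (∀ i < L, ∀ rI : Fin (dm (i + 1)),
              (∑ j, |A i rI j|) + |b i rI| ≤ ω i) ∧
            v = (1 / n) * ∑ i : Fin n,
                (if s i then (1 : ℝ) else -1) * ℓ (reluNet dm A b L (x i)) (y i)}
      = {v : ℝ | ∃ f ∈ V, v = (1 / n) * ∑ i, sgn (s i) * f i} := by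
    intro s
    ext v
    constructor
    · rintro ⟨A, b, h, rfl⟩
      exact ⟨_, ⟨A, b, h, rfl⟩, rfl⟩
    · rintro ⟨f, ⟨A, b, h, rfl⟩, rfl⟩
      exact ⟨A, b, h, rfl⟩
  simp only [hset]
  refine hmas.trans ?_
  set W := Real.log β + Real.log n + (∑ i ∈ Finset.range L, Real.log (dm (i + 1)))
            + L * logPlus (logPlus (β * Real.sqrt (n / (dm L : ℝ)))) with hW
  have hlog2 : (0.69:ℝ) ≤ Real.log 2 := by have := Real.log_two_gt_d9; linarith
  have hsum : 0.69 * (L:ℝ) ≤ ∑ i ∈ Finset.range L, Real.log (dm (i + 1)) := by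
    calc 0.69 * (L:ℝ) = ∑ i ∈ Finset.range L, (0.69:ℝ) := by simp [mul_comm]
      _ ≤ _ := Finset.sum_le_sum fun i hi => by
        refine hlog2.trans (Real.log_le_log (by norm_num) ?_)
        exact_mod_cast hdm (i+1) (by have := Finset.mem_range.1 hi; omega)
  have hlp : 0 ≤ (L:ℝ) * logPlus (logPlus (β * Real.sqrt (n / (dm L : ℝ)))) :=
    mul_nonneg (by linarith) (le_max_left _ _)
  have hlβ := Real.log_nonneg hβ1
  have hln := Real.log_nonneg hn1
  have hW0 : 0.69 ≤ W := by rw [hW]; nlinarith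
  have hlogq : Real.log (12 * q) ≤ 9 * W := by
    have h1 : Real.log (12 * q) ≤ Real.log (32 * (L * β * n)) :=
      Real.log_le_log (by linarith) (by linarith)
    have h2 : Real.log (32 * (L * β * n)) = 5 * Real.log 2 + (Real.log L + Real.log β + Real.log n) := by
      rw [Real.log_mul (by norm_num) (by positivity), Real.log_mul (by positivity) (by positivity),
        Real.log_mul (by positivity) (by positivity), show (32:ℝ) = 2 ^ 5 by norm_num, Real.log_pow]
      norm_num
    have h3 := Real.log_le_sub_one_of_pos (show (0:ℝ) < L by linarith)
    have h4 := Real.log_two_lt_d9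
    rw [hW]; nlinarith
  have hR0 : 0 ≤ Real.sqrt (N / (n:ℝ)) * Real.sqrt W := by positivity
  have hRe : Real.sqrt (N / (n:ℝ)) * Real.sqrt W = Real.sqrt (N / (n:ℝ) * W) :=
    (Real.sqrt_mul (by positivity) _).symm
  have e1 : 1 / (n:ℝ) ≤ 2 * Real.sqrt (N / (n:ℝ) * W) := by
    have h1 : 1 / (2 * (n:ℝ)) ≤ Real.sqrt (N / (n:ℝ) * W) := by
      apply Real.le_sqrt_of_sq_le
      have h2 : (1 / (2 * (n:ℝ))) ^ 2 = (1 / n) * (1 / (4 * n)) := by field_simp; ring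
      have h3 : (N:ℝ) / n * W = (1 / n) * (N * W) := by field_simp
      rw [h2, h3]
      refine mul_le_mul_of_nonneg_left ?_ (by positivity)
      have : 1 / (4 * (n:ℝ)) ≤ 1 / 4 := by
        apply one_div_le_one_div_of_le <;> linarith
      nlinarith
    have : 1 / (n:ℝ) = 2 * (1 / (2 * (n:ℝ))) := by field_simp
    rw [this]; linarith
  have e2 : Real.sqrt (2 * Real.log ((12 * (q:ℝ)) ^ N) / n) ≤ 5 * Real.sqrt (N / (n:ℝ) * W) := by
    rw [Real.log_pow]
    have h5 : 5 * Real.sqrt (N / (n:ℝ) * W) = Real.sqrt (5 ^ 2 * (N / (n:ℝ) * W)) := by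
      rw [Real.sqrt_mul (show (0:ℝ) ≤ 5 ^ 2 by norm_num), Real.sqrt_sq (show (0:ℝ) ≤ 5 by norm_num)]
    rw [h5]
    apply Real.sqrt_le_sqrt
    have h6 : 2 * ((N:ℝ) * Real.log (12 * q)) / n = (N / n) * (2 * Real.log (12 * q)) := by ring
    have h7 : (5:ℝ) ^ 2 * (N / (n:ℝ) * W) = (N / n) * (25 * W) := by ring
    rw [h6, h7]
    exact mul_le_mul_of_nonneg_left (by linarith) (by positivity)
  rw [mul_assoc (12 * α), hRe]
  have h8 : α / n = α * (1 / n) := by ring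
  rw [h8]
  have := mul_le_mul_of_nonneg_left e1 hα0.le
  have := mul_le_mul_of_nonneg_left e2 hα0.le
  rw [hRe] at hR0
  nlinarith [mul_nonneg hα0.le hR0]
end
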